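/- Let (S,+) be a commutative semigroup, G a 2-cancellative abelian group, σ, τ : S → S two involutions, and fix x₀, z₀ ∈ S. If f : S² → G satisfies f(x+y, z+w) + f(x+σ(y), z+τ(w)) = 2 f(x,z) for all x, y, z, w ∈ S, then the function a : S² → G defined by a(x,z) = f(x,z) − f(x₀+σ(x₀), z₀+τ(z₀)) is additive, i.e. a(x+y, z+w) = a(x,z) + a(y,w) for all x, y, z, w ∈ S, and satisfies a(σ(x), τ(z)) = −a(x,z) for all x, z ∈ S. -/

import Mathlib

/-!
Work with one variable in the product semigroup. Substituting `φ q` for `q` in the equation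
`F (p + q) + F (p + φ q) = 2 F p` shows that `F (p + φ (φ q)) = F (p + q)`, so any additive map `φ`
behaves like an involution as far as `F` can see. Hence translating by `q + φ q` does not change
`F`, and all values `F (q + φ q)` equal one constant `c` with `F p + F (φ p) = 2 c`. Adding the
equations for `(p, q)` and `(q, p)`, whose second terms sum to `2 c`, gives
`2 F (p + q) + 2 c = 2 F p + 2 F q`.
-/

/-- The one-variable Jensen type functional equation for `F`, relative to a self-map `φ` of its
domain. The equation in several variables is the case of a product domain and a product map. -/
def IsJensenType {T G : Type*} [Add T] [AddMonoid G] (φ : T → T) (F : T → G) : Prop :=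
  ∀ p q, F (p + q) + F (p + φ q) = 2 • F p

namespace IsJensenType

variable {T G : Type*} [AddCommSemigroup T] [AddCancelCommMonoid G] {F : T → G}

theorem apply_add_map_map {φ : T → T} (hF : IsJensenType φ F) (p q : T) :
    F (p + φ (φ q)) = F (p + q) := by
  have h : F (p + φ q) + F (p + φ (φ q)) = F (p + φ q) + F (p + q) := by
    rw [hF p (φ q), add_comm, hF p q]
  exact add_left_cancel h

variable {φ : T →ₙ+ T}

theorem apply_add_add_map (hF : IsJensenType φ F) (hG : IsSMulRegular G (2 : ℕ)) (p q : T) :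
    F (p + (q + φ q)) = F p := by
  have h : F (p + φ (q + φ q)) = F (p + (q + φ q)) := by
    rw [map_add, ← add_assoc, hF.apply_add_map_map, add_assoc, add_comm (φ q)]
  apply hG
  simpa only [h, ← two_nsmul] using hF p (q + φ q)

theorem apply_add_apply_map (hF : IsJensenType φ F) (hG : IsSMulRegular G (2 : ℕ)) (p₀ p : T) :
    F p + F (φ p) = 2 • F (p₀ + φ p₀) := by
  simpa only [add_comm (p₀ + φ p₀), hF.apply_add_add_map hG] using hF (p₀ + φ p₀) p

theorem apply_add_add_const (hF : IsJensenType φ F) (hG : IsSMulRegular G (2 : ℕ)) (p₀ p q : T) :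
    F (p + q) + F (p₀ + φ p₀) = F p + F q := by
  have hcross : F (p + φ q) + F (q + φ p) = 2 • F (p₀ + φ p₀) := by
    rw [← hF.apply_add_apply_map hG p₀ (p + φ q), map_add, hF.apply_add_map_map, add_comm q]
  apply hG
  calc 2 • (F (p + q) + F (p₀ + φ p₀))
      = (F (p + q) + F (p + φ q)) + (F (q + p) + F (q + φ p)) := by
        rw [nsmul_add, ← hcross, two_nsmul, add_comm q p, add_add_add_comm]
    _ = 2 • (F p + F q) := by rw [hF p q, hF q p, nsmul_add]

end IsJensenType

theorem jensen_type_additive_part_general {S S' G : Type*} [AddCommSemigroup S]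
    [AddCommSemigroup S'] [AddCommGroup G] (hG : IsSMulRegular G (2 : ℕ))
    (σ : S →ₙ+ S) (τ : S' →ₙ+ S') (x₀ : S) (z₀ : S') (f : S → S' → G)
    (hf : ∀ x y z w, f (x + y) (z + w) + f (x + σ y) (z + τ w) = 2 • f x z)
    (a : S → S' → G) (ha : ∀ x z, a x z = f x z - f (x₀ + σ x₀) (z₀ + τ z₀)) :
    (∀ x y z w, a (x + y) (z + w) = a x z + a y w) ∧ ∀ x z, a (σ x) (τ z) = -a x z := by
  have hF : IsJensenType (σ.prodMap τ) (Function.uncurry f) :=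
    fun p q => hf p.1 q.1 p.2 q.2
  refine ⟨fun x y z w => ?_, fun x z => ?_⟩
  · have hadd : f (x + y) (z + w) + f (x₀ + σ x₀) (z₀ + τ z₀) = f x z + f y w :=
      hF.apply_add_add_const hG (x₀, z₀) (x, z) (y, w)
    rw [ha, ha, ha, eq_sub_of_add_eq hadd]
    abel
  · have hodd : f x z + f (σ x) (τ z) = 2 • f (x₀ + σ x₀) (z₀ + τ z₀) :=
      hF.apply_add_apply_map hG (x₀, z₀) (x, z)
    rw [ha, ha, eq_sub_of_add_eq' hodd]
    abel

/-- subtracting the constant from a Jensen type solution yields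
an additive function that is odd with respect to the involutions. -/
theorem jensen_type_additive_part
    {S G : Type*} [AddCommSemigroup S] [AddCommGroup G]
    (hG : ∀ g h : G, g + g = h + h → g = h)
    (σ τ : S → S)
    (hσinv : ∀ x, σ (σ x) = x) (hσadd : ∀ x y, σ (x + y) = σ x + σ y)
    (hτinv : ∀ x, τ (τ x) = x) (hτadd : ∀ x y, τ (x + y) = τ x + τ y)
    (x₀ z₀ : S)
    (f : S → S → G)
    (hf : ∀ x y z w, f (x + y) (z + w) + f (x + σ y) (z + τ w) = 2 • f x z)
    (a : S → S → G)
    (hadef : ∀ x z, a x z = f x z - f (x₀ + σ x₀) (z₀ + τ z₀)) :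
    (∀ x y z w, a (x + y) (z + w) = a x z + a y w) ∧
    (∀ x z, a (σ x) (τ z) = - a x z) :=
  have hreg : IsSMulRegular G (2 : ℕ) := fun g h hgh =>
    hG g h (by simpa only [two_nsmul] using hgh)
  jensen_type_additive_part_general hreg ⟨σ, hσadd⟩ ⟨τ, hτadd⟩ x₀ z₀ f hf a hadef
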